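/- Let ℓ, m, n be positive integers, w ∈ S_{m,ℓ} and v ∈ S_{n,ℓ}. Then the length (number of inversions) of the permutation (w ⊞ 1_n)·(1_m ⊞ v) of {1,…,m+n+ℓ} equals ℓ(w) + ℓ(v), the sum of the numbers of inversions of w and of v. -/

import Mathlib

/-- `u` is a minimal-length left coset representative in `S_{m,ℓ}`:
a permutation of `{1,…,m+ℓ}` (encoded `0`-indexed as `Fin (m + l)`) that is
strictly increasing on the first `m` values and on the last `l` values. -/
def IsMinRep (m l : ℕ) (u : Equiv.Perm (Fin (m + l))) : Prop :=
  (∀ i j : Fin (m + l), i < j → (j : ℕ) < m → u i < u j) ∧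
  (∀ i j : Fin (m + l), i < j → m ≤ (i : ℕ) → u i < u j)

/-- Transport a permutation of `Fin a` to a permutation of `Fin b` along `a = b`. -/
def permCast {a b : ℕ} (h : a = b) (u : Equiv.Perm (Fin a)) : Equiv.Perm (Fin b) :=
  Equiv.permCongr (finCongr h) u

/-- The concatenation `u ⊞ v` of permutations: it acts as `u` on the first `p`
values and as (the shift by `p` of) `v` on the last `q` values. -/
def boxplus {p q : ℕ} (u : Equiv.Perm (Fin p)) (v : Equiv.Perm (Fin q)) :
    Equiv.Perm (Fin (p + q)) :=
  Equiv.permCongr finSumFinEquiv (Equiv.sumCongr u v)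

/-- `w ⊞ 1_n`, viewed as a permutation of `{1,…,m+n+ℓ}`. -/
def bpFirst (m l n : ℕ) (w : Equiv.Perm (Fin (m + l))) : Equiv.Perm (Fin (m + n + l)) :=
  permCast (by omega) (boxplus w (1 : Equiv.Perm (Fin n)))

/-- `1_m ⊞ v`, viewed as a permutation of `{1,…,m+n+ℓ}`. -/
def bpSecond (m l n : ℕ) (v : Equiv.Perm (Fin (n + l))) : Equiv.Perm (Fin (m + n + l)) :=
  permCast (by omega) (boxplus (1 : Equiv.Perm (Fin m)) v)

/-- The number of inversions (the length) of a permutation. -/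
def invCount {N : ℕ} (u : Equiv.Perm (Fin N)) : ℕ :=
  (Finset.univ.filter (fun p : Fin N × Fin N => p.1 < p.2 ∧ u p.2 < u p.1)).card

/-- One step of the Bruhat order: `x = t·u` for a transposition `t`, with
`ℓ(u) < ℓ(x)`. -/
def BruhatStep {N : ℕ} (u x : Equiv.Perm (Fin N)) : Prop :=
  (∃ a b : Fin N, a ≠ b ∧ x = Equiv.swap a b * u) ∧ invCount u < invCount x

/-- The Bruhat order on the symmetric group: the order generated by
`u < t·u` whenever `t` is a transposition and `ℓ(u) < ℓ(t·u)`. -/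
def BruhatLE {N : ℕ} (u x : Equiv.Perm (Fin N)) : Prop :=
  Relation.ReflTransGen BruhatStep u x

/-- The permutation `w[n,ℓ]` of `{1,…,n+ℓ}` sending `k ↦ k + ℓ` for `k ≤ n`
and `k ↦ k - n` for `n < k`. -/
def wshift (n l : ℕ) : Equiv.Perm (Fin (n + l)) :=
  finSumFinEquiv.symm.trans ((Equiv.sumComm (Fin n) (Fin l)).trans
    (finSumFinEquiv.trans (finCongr (by omega))))

/-!
An inversion of `ab` is either an inversion of `b` whose two values `a` keeps in order, or the
pullback along `b` of an inversion of `a` whose two values `b⁻¹` keeps in order. So lengths add as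
soon as `a` keeps in order every pair of values inverted by `b`. The values inverted by `1_m ⊞ v`
all exceed `m`, and `w ⊞ 1_n` is increasing on the positions beyond `m`.
-/

section Inversions

variable {α : Type*} [Fintype α] [LinearOrder α]

/-- The inversion set of a permutation `u`, so that `invCount u` is its cardinality. An inversion
is encoded as the pair `(i, j)` of positions `i < j` (not of values) with `u j < u i`. -/
def inversions (u : Equiv.Perm α) : Finset (α × α) :=
  Finset.univ.filter fun p => p.1 < p.2 ∧ u p.2 < u p.1

theorem mem_inversions {u : Equiv.Perm α} {p : α × α} :
    p ∈ inversions u ↔ p.1 < p.2 ∧ u p.2 < u p.1 := by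
  simp only [inversions, Finset.mem_filter_univ]

theorem inversions_one : inversions (1 : Equiv.Perm α) = ∅ :=
  Finset.filter_eq_empty_iff.mpr fun _ _ hp => lt_asymm hp.1 hp.2

theorem filter_gt_inversions_mul {a b : Equiv.Perm α}
    (h : ∀ p ∈ inversions b, a (b p.2) < a (b p.1)) :
    (inversions (a * b)).filter (fun p => b p.2 < b p.1) = inversions b := by
  ext p
  simp only [Finset.mem_filter, mem_inversions, Equiv.Perm.mul_apply]
  exact ⟨fun ⟨⟨hlt, _⟩, hb⟩ => ⟨hlt, hb⟩,
    fun ⟨hlt, hb⟩ => ⟨⟨hlt, h p (mem_inversions.mpr ⟨hlt, hb⟩)⟩, hb⟩⟩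

theorem map_filter_not_gt_inversions_mul {a b : Equiv.Perm α}
    (h : ∀ p ∈ inversions b, a (b p.2) < a (b p.1)) :
    ((inversions (a * b)).filter (fun p => ¬ b p.2 < b p.1)).map
      (b.prodCongr b).toEmbedding = inversions a := by
  ext ⟨x, y⟩
  obtain ⟨i, rfl⟩ := b.surjective x
  obtain ⟨j, rfl⟩ := b.surjective y
  have mem_map : (b i, b j) ∈ ((inversions (a * b)).filter (fun p => ¬ b p.2 < b p.1)).map
      (b.prodCongr b).toEmbedding ↔ (i < j ∧ a (b j) < a (b i)) ∧ ¬ b j < b i := by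
    simp [Finset.mem_map_equiv, mem_inversions]
  rw [mem_map, mem_inversions]
  constructor
  · rintro ⟨⟨hlt, ha⟩, hb⟩
    exact ⟨lt_of_le_of_ne (not_lt.mp hb) (b.injective.ne hlt.ne), ha⟩
  · rintro ⟨hb, ha⟩
    refine ⟨⟨?_, ha⟩, hb.not_gt⟩
    by_contra! hle
    have hlt : j < i := lt_of_le_of_ne hle fun hji => hb.ne (congrArg b hji.symm)
    exact lt_asymm ha (h (j, i) (mem_inversions.mpr ⟨hlt, hb⟩))

theorem card_inversions_mul {a b : Equiv.Perm α}
    (h : ∀ p ∈ inversions b, a (b p.2) < a (b p.1)) :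
    (inversions (a * b)).card = (inversions a).card + (inversions b).card := by
  rw [← Finset.card_filter_add_card_filter_not (fun p => b p.2 < b p.1),
    filter_gt_inversions_mul h, ← map_filter_not_gt_inversions_mul h, Finset.card_map,
    add_comm]

end Inversions

theorem invCount_eq_card_inversions {N : ℕ} (u : Equiv.Perm (Fin N)) :
    invCount u = (inversions u).card :=
  rfl

theorem invCount_one (N : ℕ) : invCount (1 : Equiv.Perm (Fin N)) = 0 := by
  rw [invCount_eq_card_inversions, inversions_one, Finset.card_empty]

theorem invCount_permCast {a b : ℕ} (h : a = b) (u : Equiv.Perm (Fin a)) :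
    invCount (permCast h u) = invCount u := by
  subst h
  rfl

theorem strictMonoOn_permCast {a b k : ℕ} (h : a = b) {u : Equiv.Perm (Fin a)}
    (hu : StrictMonoOn u {i | k ≤ (i : ℕ)}) :
    StrictMonoOn (permCast h u) {i | k ≤ (i : ℕ)} := by
  subst h
  exact hu

theorem le_permCast_of_mem_inversions {a b k : ℕ} (h : a = b) {u : Equiv.Perm (Fin a)}
    (hu : ∀ x ∈ inversions u, k ≤ (u x.2 : ℕ)) :
    ∀ x ∈ inversions (permCast h u), k ≤ (permCast h u x.2 : ℕ) := by
  subst h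
  exact hu

theorem castAdd_lt_natAdd {p q : ℕ} (i : Fin p) (j : Fin q) :
    Fin.castAdd q i < Fin.natAdd p j :=
  Fin.lt_def.mpr (i.isLt.trans_le (Nat.le_add_right p j))

section Boxplus

variable {p q : ℕ} (u : Equiv.Perm (Fin p)) (v : Equiv.Perm (Fin q))

theorem boxplus_castAdd (i : Fin p) :
    boxplus u v (Fin.castAdd q i) = Fin.castAdd q (u i) := by
  simp [boxplus, Equiv.permCongr_apply]

theorem boxplus_natAdd (i : Fin q) :
    boxplus u v (Fin.natAdd p i) = Fin.natAdd p (v i) := by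
  simp [boxplus, Equiv.permCongr_apply]

theorem invCount_boxplus : invCount (boxplus u v) = invCount u + invCount v := by
  have castAdd_lt_castAdd (i j : Fin p) : Fin.castAdd q i < Fin.castAdd q j ↔ i < j := Iff.rfl
  have not_natAdd_lt_castAdd (i : Fin q) (j : Fin p) : ¬ Fin.natAdd p i < Fin.castAdd q j :=
    (castAdd_lt_natAdd j i).not_gt
  simp only [invCount, Finset.card_filter, Fintype.sum_prod_type, Fin.sum_univ_add,
    boxplus_castAdd, boxplus_natAdd, castAdd_lt_castAdd, Fin.natAdd_lt_natAdd_iff,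
    not_natAdd_lt_castAdd, and_false, false_and, if_false, Finset.sum_const_zero, add_zero,
    zero_add]

variable {u v}

theorem le_boxplus_one_of_mem_inversions {x : Fin (p + q) × Fin (p + q)}
    (hx : x ∈ inversions (boxplus 1 v)) : p ≤ (boxplus 1 v x.2 : ℕ) := by
  obtain ⟨i, j⟩ := x
  obtain ⟨hij, hinv⟩ := mem_inversions.mp hx
  induction j using Fin.addCases with
  | right j => simp only [boxplus_natAdd, Fin.val_natAdd, Nat.le_add_right]
  | left j =>
    induction i using Fin.addCases with
    | left i =>
      simp only [boxplus_castAdd, Equiv.Perm.one_apply] at hinv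
      exact absurd hij hinv.not_gt
    | right i => exact absurd hij (castAdd_lt_natAdd j i).not_gt

theorem strictMonoOn_boxplus_one {k : ℕ} (hu : StrictMonoOn u {i | k ≤ (i : ℕ)}) :
    StrictMonoOn (boxplus u (1 : Equiv.Perm (Fin q))) {i | k ≤ (i : ℕ)} := by
  intro i hi j hj hij
  induction i using Fin.addCases with
  | left i =>
    induction j using Fin.addCases with
    | left j =>
      rw [boxplus_castAdd, boxplus_castAdd]
      exact hu hi hj hij
    | right j =>
      rw [boxplus_castAdd, boxplus_natAdd]
      exact castAdd_lt_natAdd _ _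
  | right i =>
    induction j using Fin.addCases with
    | left j => exact absurd hij (castAdd_lt_natAdd j i).not_gt
    | right j => simpa only [boxplus_natAdd, Equiv.Perm.one_apply] using hij

end Boxplus

section BlockFactors

variable {m l n : ℕ}

theorem strictMonoOn_bpFirst {w : Equiv.Perm (Fin (m + l))} {k : ℕ}
    (hw : StrictMonoOn w {i | k ≤ (i : ℕ)}) :
    StrictMonoOn (bpFirst m l n w) {i | k ≤ (i : ℕ)} :=
  strictMonoOn_permCast _ (strictMonoOn_boxplus_one hw)

theorem le_bpSecond_of_mem_inversions {v : Equiv.Perm (Fin (n + l))}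
    {x : Fin (m + n + l) × Fin (m + n + l)} (hx : x ∈ inversions (bpSecond m l n v)) :
    m ≤ (bpSecond m l n v x.2 : ℕ) :=
  le_permCast_of_mem_inversions _ (fun _ => le_boxplus_one_of_mem_inversions) x hx

theorem invCount_bpFirst (w : Equiv.Perm (Fin (m + l))) :
    invCount (bpFirst m l n w) = invCount w := by
  rw [bpFirst, invCount_permCast, invCount_boxplus, invCount_one, add_zero]

theorem invCount_bpSecond (v : Equiv.Perm (Fin (n + l))) :
    invCount (bpSecond m l n v) = invCount v := by
  rw [bpSecond, invCount_permCast, invCount_boxplus, invCount_one, zero_add]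

end BlockFactors

theorem length_bp_mul_bp_general (l m n : ℕ) (w : Equiv.Perm (Fin (m + l)))
    (hw : StrictMonoOn w {i | m ≤ (i : ℕ)}) (v : Equiv.Perm (Fin (n + l))) :
    invCount (bpFirst m l n w * bpSecond m l n v) = invCount w + invCount v := by
  have bpFirst_preserves : ∀ x ∈ inversions (bpSecond m l n v),
      bpFirst m l n w (bpSecond m l n v x.2) < bpFirst m l n w (bpSecond m l n v x.1) := by
    intro x hx
    have hinv : bpSecond m l n v x.2 < bpSecond m l n v x.1 := (mem_inversions.mp hx).2
    have hm := le_bpSecond_of_mem_inversions hx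
    exact strictMonoOn_bpFirst hw hm (hm.trans hinv.le) hinv
  rw [invCount_eq_card_inversions, card_inversions_mul bpFirst_preserves,
    ← invCount_eq_card_inversions, ← invCount_eq_card_inversions, invCount_bpFirst,
    invCount_bpSecond]

/-- For `w ∈ S_{m,ℓ}` and `v ∈ S_{n,ℓ}`, the length of `(w ⊞ 1_n)·(1_m ⊞ v)`
equals `ℓ(w) + ℓ(v)`. -/
theorem length_bp_mul_bp (l m n : ℕ) (hl : 0 < l) (hm : 0 < m) (hn : 0 < n)
    (w : Equiv.Perm (Fin (m + l))) (hw : IsMinRep m l w)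
    (v : Equiv.Perm (Fin (n + l))) (hv : IsMinRep n l v) :
    invCount (bpFirst m l n w * bpSecond m l n v) = invCount w + invCount v :=
  length_bp_mul_bp_general l m n w (fun i hi _ _ hij => hw.2 i _ hij hi) v
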